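/- arXiv:1008.5030 — 2 statements merged into one kernel-verified Lean document; each statement's English description precedes it below -/
import Mathlib

section
/- Suppose ω : ℝ → ℝ is Lipschitz with values in (−1,0), sup_ℝ ω < 0, and there exists A > 0 such that inf_{y₁∈ℝ} ∫₀^A |ω'(y₁+t)|² dt > 0. Then there exists a constant 𝒞 > 0 such that every smooth compactly supported vector field u : closure(R) → ℝ² satisfying the tangency condition u·ν = 0 on Γ obeys the Poincaré inequality ‖u‖_{L²(R)} ≤ 𝒞 ‖∇u‖_{L²(R)}. -/
open MeasureTheory Real Set Filter

noncomputable section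

/-- The rough layer `R = {y : ω(y₁) < y₂ < 0}`. -/
def layerR (ω : ℝ → ℝ) : Set (ℝ × ℝ) := {y : ℝ × ℝ | ω y.1 < y.2 ∧ y.2 < 0}

/-- Squared Euclidean norm of a vector of `ℝ²`. -/
def vsq (w : ℝ × ℝ) : ℝ := w.1 ^ 2 + w.2 ^ 2

/-- Squared Frobenius norm of the full gradient `∇u`. -/
def gradSq (u : ℝ × ℝ → ℝ × ℝ) (y : ℝ × ℝ) : ℝ :=
  vsq (fderiv ℝ u y (1, 0)) + vsq (fderiv ℝ u y (0, 1))

/-- The tangency condition `u · ν = 0` on `Γ = {y₂ = ω(y₁)}`, i.e.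
`u(y₁, ω(y₁)) · (−ω'(y₁), 1) = 0` for a.e. `y₁`. -/
def TangentOn (ω : ℝ → ℝ) (u : ℝ × ℝ → ℝ × ℝ) : Prop :=
  ∀ᵐ y₁ ∂(volume : Measure ℝ),
    (u (y₁, ω y₁)).1 * (-(deriv ω y₁)) + (u (y₁, ω y₁)).2 = 0

/-! Write `n = (−ω', 1)` for the unnormalised normal. Since `ω` is bounded while `∫ ω'²` grows
linearly with the length of the interval, on a long enough window `(a, a + L]` every constant
vector `c` satisfies `|c|² ≤ ∫ (n · c)²`: the cross term of the square integrates to the bounded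
quantity `ω(a + L) − ω(a)`. Taking for `c` the value of `u` at a point of a horizontal line inside
the layer, `n · u = 0` on `Γ` turns `n · c` into `n · (c − u|_Γ)`, which is controlled by the
gradient along a horizontal and a vertical segment. Integrating over all windows bounds the trace
of `u` on the line, a line of at most average energy is available because `sup ω < 0`, and the
trace controls `u` on the whole layer. All estimates are made with lower Lebesgue integrals, so
that the finiteness of `‖u‖` is part of the conclusion. -/

open scoped ENNReal NNReal

section OneVariable

theorem sq_lintegral_le_measure_univ_mul {α : Type*} [MeasurableSpace α] {μ : Measure α}
    {f : α → ℝ≥0∞} (hf : AEMeasurable f μ) :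
    (∫⁻ x, f x ∂μ) ^ 2 ≤ μ univ * ∫⁻ x, f x ^ 2 ∂μ := by
  have hölder := ENNReal.lintegral_mul_le_Lp_mul_Lq μ Real.HolderConjugate.two_two
    (aemeasurable_const (b := (1 : ℝ≥0∞))) hf
  simp only [Pi.mul_apply, one_mul, lintegral_const, ENNReal.rpow_two, one_pow] at hölder
  calc (∫⁻ x, f x ∂μ) ^ 2
      ≤ (μ univ ^ (1 / 2 : ℝ) * (∫⁻ x, f x ^ 2 ∂μ) ^ (1 / 2 : ℝ)) ^ 2 := by gcongr
    _ = μ univ * ∫⁻ x, f x ^ 2 ∂μ := by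
      simp only [mul_pow, ← ENNReal.rpow_mul_natCast]
      norm_num

variable {E : Type*} [NormedAddCommGroup E]

theorem enorm_add_sq_le_two_mul (v w : E) : ‖v + w‖ₑ ^ 2 ≤ 2 * (‖v‖ₑ ^ 2 + ‖w‖ₑ ^ 2) := by
  simp only [enorm]
  exact_mod_cast (pow_le_pow_left' (nnnorm_add_le v w) 2).trans add_sq_le

theorem enorm_sub_sq_le_lintegral_deriv [NormedSpace ℝ E] {φ : ℝ → E} (hφ : ContDiff ℝ 1 φ)
    {a b p q : ℝ} (hp : p ∈ Icc a b) (hq : q ∈ Icc a b) :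
    ‖φ p - φ q‖ₑ ^ 2 ≤ ENNReal.ofReal (b - a) * ∫⁻ t in Ioo a b, ‖deriv φ t‖ₑ ^ 2 := by
  wlog hqp : q ≤ p generalizing p q
  · rw [enorm_sub_rev]
    exact this hq hp (le_of_not_ge hqp)
  have hmeas : Measurable fun t => ‖deriv φ t‖ₑ := (hφ.continuous_deriv le_rfl).enorm.measurable
  calc ‖φ p - φ q‖ₑ ^ 2
      ≤ (∫⁻ t in Icc q p, ‖deriv φ t‖ₑ) ^ 2 := by
        gcongr
        exact enorm_sub_le_lintegral_deriv_of_contDiffOn_Icc hφ.contDiffOn hqp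
    _ ≤ (∫⁻ t in Ioo a b, ‖deriv φ t‖ₑ) ^ 2 := by
        rw [← restrict_Ioo_eq_restrict_Icc]
        gcongr
        exacts [hq.1, hp.2]
    _ ≤ ENNReal.ofReal (b - a) * ∫⁻ t in Ioo a b, ‖deriv φ t‖ₑ ^ 2 := by
        simpa using sq_lintegral_le_measure_univ_mul (μ := volume.restrict (Ioo a b))
          hmeas.aemeasurable

theorem lintegral_setLIntegral_Ioc_add {f : ℝ → ℝ≥0∞} (hf : Measurable f) (L : ℝ≥0) :
    ∫⁻ a : ℝ, ∫⁻ x in Ioc a (a + L), f x = L * ∫⁻ x, f x := by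
  have hshift (a : ℝ) : ∫⁻ x in Ioc a (a + L), f x = ∫⁻ t in Ioc (0 : ℝ) L, f (a + t) := by
    rw [← (measurePreserving_add_left volume a).setLIntegral_comp_preimage measurableSet_Ioc hf,
      preimage_const_add_Ioc, sub_self, add_sub_cancel_left]
  simp_rw [hshift]
  rw [lintegral_lintegral_swap (by fun_prop)]
  simp [lintegral_add_right_eq_self f, mul_comm]

end OneVariable

section Layer

variable {ω : ℝ → ℝ}

theorem measurableSet_layerR (hω : Measurable ω) : MeasurableSet (layerR ω) :=
  (measurableSet_lt (hω.comp measurable_fst) measurable_snd).inter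
    (measurableSet_lt measurable_snd measurable_const)

theorem lintegral_indicator_layerR_column (f : ℝ × ℝ → ℝ≥0∞) (x : ℝ) :
    ∫⁻ t, (layerR ω).indicator f (x, t) = ∫⁻ t in Ioo (ω x) 0, f (x, t) := by
  rw [← lintegral_indicator measurableSet_Ioo]
  rfl

theorem lintegral_layerR (hω : Measurable ω) {f : ℝ × ℝ → ℝ≥0∞} (hf : Measurable f) :
    ∫⁻ y in layerR ω, f y = ∫⁻ x, ∫⁻ t in Ioo (ω x) 0, f (x, t) := by
  rw [← lintegral_indicator (measurableSet_layerR hω), Measure.volume_eq_prod,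
    lintegral_prod _ (hf.indicator (measurableSet_layerR hω)).aemeasurable]
  simp_rw [lintegral_indicator_layerR_column]

theorem measurable_lintegral_column (hω : Measurable ω) {f : ℝ × ℝ → ℝ≥0∞} (hf : Measurable f) :
    Measurable fun x => ∫⁻ t in Ioo (ω x) 0, f (x, t) := by
  simpa only [lintegral_indicator_layerR_column] using
    (hf.indicator (measurableSet_layerR hω)).lintegral_prod_right' (ν := volume)

theorem exists_lintegral_slice_le {h : ℝ≥0} (hh : h ≠ 0) (hωh : ∀ x, ω x ≤ -h)
    {f : ℝ × ℝ → ℝ≥0∞} (hf : Measurable f) :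
    ∃ s ∈ Ioo (-h : ℝ) 0, ∫⁻ x, f (x, s) ≤ (∫⁻ y in layerR ω, f y) / h := by
  have hvol : volume (Ioo (-h : ℝ) 0) = h := by simp
  obtain ⟨s, hs, hle⟩ := exists_le_setLAverage (μ := volume) (s := Ioo (-h : ℝ) 0)
    (f := fun s => ∫⁻ x, f (x, s)) (by simpa [hvol] using hh) (by simp [hvol])
    hf.lintegral_prod_left'.aemeasurable
  have hstrip : (univ : Set ℝ) ×ˢ Ioo (-h : ℝ) 0 ⊆ layerR ω := fun y hy =>
    ⟨(hωh y.1).trans_lt hy.2.1, hy.2.2⟩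
  refine ⟨s, hs, hle.trans ?_⟩
  rw [setLAverage_eq, hvol]
  gcongr ?_ / _
  calc ∫⁻ s in Ioo (-h : ℝ) 0, ∫⁻ x, f (x, s)
      = ∫⁻ y in (univ : Set ℝ) ×ˢ Ioo (-h : ℝ) 0, f y := by
        rw [← lintegral_prod_symm' _ hf, Measure.volume_eq_prod, ← Measure.prod_restrict,
          Measure.restrict_univ]
    _ ≤ ∫⁻ y in layerR ω, f y := lintegral_mono_set hstrip

end Layer

section Poincare

variable {E : Type*} [NormedAddCommGroup E] [NormedSpace ℝ E] {F : ℝ × ℝ → E}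

/-- The density `|∂₁F|² + |∂₂F|²` of the Dirichlet energy of a map on the plane, as an extended
nonnegative number so that it can be integrated without integrability assumptions. -/
def dirichletDensity (F : ℝ × ℝ → E) (y : ℝ × ℝ) : ℝ≥0∞ :=
  ‖fderiv ℝ F y (1, 0)‖ₑ ^ 2 + ‖fderiv ℝ F y (0, 1)‖ₑ ^ 2

theorem measurable_dirichletDensity (hF : ContDiff ℝ 1 F) : Measurable (dirichletDensity F) := by
  have hF' (v : ℝ × ℝ) : Continuous fun y => fderiv ℝ F y v :=
    (hF.continuous_fderiv one_ne_zero).clm_apply continuous_const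
  exact ((hF' _).enorm.measurable.pow_const 2).add ((hF' _).enorm.measurable.pow_const 2)

theorem enorm_sub_sq_le_horizontal (hF : ContDiff ℝ 1 F) (s : ℝ) {a b p q : ℝ}
    (hp : p ∈ Icc a b) (hq : q ∈ Icc a b) :
    ‖F (p, s) - F (q, s)‖ₑ ^ 2 ≤
      ENNReal.ofReal (b - a) * ∫⁻ x in Ioo a b, dirichletDensity F (x, s) := by
  have hderiv (x : ℝ) : deriv (fun x => F (x, s)) x = fderiv ℝ F (x, s) (1, 0) :=
    ((hF.differentiable one_ne_zero (x, s)).hasFDerivAt.comp_hasDerivAt x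
      ((hasDerivAt_id x).prodMk (hasDerivAt_const x s))).deriv
  refine (enorm_sub_sq_le_lintegral_deriv (φ := fun x => F (x, s)) (by fun_prop) hp hq).trans ?_
  simp_rw [hderiv]
  gcongr
  exact le_self_add

theorem enorm_sub_sq_le_vertical (hF : ContDiff ℝ 1 F) (x : ℝ) {a b p q : ℝ}
    (hp : p ∈ Icc a b) (hq : q ∈ Icc a b) :
    ‖F (x, p) - F (x, q)‖ₑ ^ 2 ≤
      ENNReal.ofReal (b - a) * ∫⁻ t in Ioo a b, dirichletDensity F (x, t) := by
  have hderiv (t : ℝ) : deriv (fun t => F (x, t)) t = fderiv ℝ F (x, t) (0, 1) :=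
    ((hF.differentiable one_ne_zero (x, t)).hasFDerivAt.comp_hasDerivAt t
      ((hasDerivAt_const t x).prodMk (hasDerivAt_id t))).deriv
  refine (enorm_sub_sq_le_lintegral_deriv (φ := fun t => F (x, t)) (by fun_prop) hp hq).trans ?_
  simp_rw [hderiv]
  gcongr
  exact le_add_self

variable {ω : ℝ → ℝ} {H L M h : ℝ≥0} {s : ℝ}

theorem enorm_sub_sq_le_column (hF : ContDiff ℝ 1 F) {x p q : ℝ} (hωH : -H ≤ ω x)
    (hp : p ∈ Icc (ω x) 0) (hq : q ∈ Icc (ω x) 0) :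
    ‖F (x, p) - F (x, q)‖ₑ ^ 2 ≤ H * ∫⁻ t in Ioo (ω x) 0, dirichletDensity F (x, t) := by
  refine (enorm_sub_sq_le_vertical hF x hp hq).trans ?_
  gcongr
  exact ENNReal.ofReal_le_coe.2 (by linarith)

theorem lintegral_layerR_le_trace (hω : Measurable ω) (hωH : ∀ x, -H ≤ ω x)
    (hωs : ∀ x, ω x ≤ s) (hs : s ≤ 0) (hF : ContDiff ℝ 1 F) :
    ∫⁻ y in layerR ω, ‖F y‖ₑ ^ 2 ≤
      2 * H * ((∫⁻ x, ‖F (x, s)‖ₑ ^ 2) + H * ∫⁻ y in layerR ω, dirichletDensity F y) := by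
  have hD := measurable_dirichletDensity hF
  set D : ℝ → ℝ≥0∞ := fun x => ∫⁻ t in Ioo (ω x) 0, dirichletDensity F (x, t)
  have hpoint (x t : ℝ) (ht : t ∈ Ioo (ω x) 0) :
      ‖F (x, t)‖ₑ ^ 2 ≤ 2 * (‖F (x, s)‖ₑ ^ 2 + H * D x) := by
    calc ‖F (x, t)‖ₑ ^ 2 = ‖F (x, s) + (F (x, t) - F (x, s))‖ₑ ^ 2 := by
          rw [add_sub_cancel]
      _ ≤ 2 * (‖F (x, s)‖ₑ ^ 2 + ‖F (x, t) - F (x, s)‖ₑ ^ 2) := enorm_add_sq_le_two_mul _ _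
      _ ≤ 2 * (‖F (x, s)‖ₑ ^ 2 + H * D x) := by
          gcongr
          exact enorm_sub_sq_le_column hF (hωH x) (Ioo_subset_Icc_self ht) ⟨hωs x, hs⟩
  have hcolumn (x : ℝ) : ∫⁻ t in Ioo (ω x) 0, ‖F (x, t)‖ₑ ^ 2 ≤
      2 * H * (‖F (x, s)‖ₑ ^ 2 + H * D x) := by
    have hvol : volume (Ioo (ω x) 0) ≤ H := by
      rw [Real.volume_Ioo]
      exact ENNReal.ofReal_le_coe.2 (by linarith [hωH x])
    calc ∫⁻ t in Ioo (ω x) 0, ‖F (x, t)‖ₑ ^ 2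
        ≤ ∫⁻ _ in Ioo (ω x) 0, 2 * (‖F (x, s)‖ₑ ^ 2 + H * D x) :=
          setLIntegral_mono' measurableSet_Ioo (hpoint x)
      _ ≤ 2 * (‖F (x, s)‖ₑ ^ 2 + H * D x) * H := by
          rw [setLIntegral_const]
          gcongr
      _ = 2 * H * (‖F (x, s)‖ₑ ^ 2 + H * D x) := by ring
  have htrace : Measurable fun x => ‖F (x, s)‖ₑ ^ 2 :=
    (hF.continuous.comp (by fun_prop)).enorm.measurable.pow_const 2
  rw [lintegral_layerR hω (hF.continuous.enorm.measurable.pow_const 2), lintegral_layerR hω hD,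
    ← lintegral_const_mul' _ _ ENNReal.coe_ne_top, ← lintegral_add_left htrace,
    ← lintegral_const_mul' _ _ (by finiteness)]
  exact lintegral_mono hcolumn

variable {G : Type*} [NormedAddCommGroup G] [NormedSpace ℝ G]

/-- A field `n` of continuous linear maps is coercive on windows of length `L` if, on every
interval of that length, the mean square of `n x c` controls each constant vector `c`. The
constant is normalised to `1`, which only affects the choice of `L`. -/
def IsWindowCoercive (n : ℝ → E →L[ℝ] G) (L : ℝ≥0) : Prop :=
  ∀ (a : ℝ) (c : E), ‖c‖ₑ ^ 2 ≤ ∫⁻ x in Ioc a (a + L), ‖n x c‖ₑ ^ 2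

theorem enorm_apply_sq_le_of_apply_eq_zero {T : E →L[ℝ] G} (hT : ‖T‖₊ ≤ M) {w : E} (hw : T w = 0)
    (v c : E) : ‖T c‖ₑ ^ 2 ≤ 2 * M ^ 2 * (‖c - v‖ₑ ^ 2 + ‖v - w‖ₑ ^ 2) := by
  calc ‖T c‖ₑ ^ 2 = ‖T (c - w)‖ₑ ^ 2 := by rw [map_sub, hw, sub_zero]
    _ ≤ (M * ‖c - w‖ₑ) ^ 2 := by
        gcongr
        refine (T.le_opENorm _).trans ?_
        gcongr
        exact ENNReal.coe_le_coe.2 hT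
    _ = M ^ 2 * ‖(c - v) + (v - w)‖ₑ ^ 2 := by rw [mul_pow, sub_add_sub_cancel]
    _ ≤ M ^ 2 * (2 * (‖c - v‖ₑ ^ 2 + ‖v - w‖ₑ ^ 2)) := by
        gcongr
        exact enorm_add_sq_le_two_mul _ _
    _ = 2 * M ^ 2 * (‖c - v‖ₑ ^ 2 + ‖v - w‖ₑ ^ 2) := by ring

variable {n : ℝ → E →L[ℝ] G}

theorem IsWindowCoercive.enorm_sq_le (hco : IsWindowCoercive n L) (hn : ∀ x, ‖n x‖₊ ≤ M)
    (hω : Measurable ω) (hωH : ∀ x, -H ≤ ω x) (hωs : ∀ x, ω x ≤ s) (hs : s ≤ 0)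
    (hF : ContDiff ℝ 1 F) (hbdry : ∀ᵐ x, n x (F (x, ω x)) = 0) (a : ℝ) :
    ‖F (a, s)‖ₑ ^ 2 ≤ 2 * M ^ 2 * ∫⁻ x in Ioc a (a + L),
      (H * (∫⁻ t in Ioo (ω x) 0, dirichletDensity F (x, t)) +
        L ^ 2 * dirichletDensity F (x, s)) := by
  have hD := measurable_dirichletDensity hF
  set D : ℝ → ℝ≥0∞ := fun x => ∫⁻ t in Ioo (ω x) 0, dirichletDensity F (x, t)
  set S : ℝ≥0∞ := ∫⁻ x in Ioc a (a + L), dirichletDensity F (x, s) with hS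
  have hDmeas : Measurable D := measurable_lintegral_column hω hD
  have hhorizontal (x : ℝ) (hx : x ∈ Ioc a (a + L)) : ‖F (a, s) - F (x, s)‖ₑ ^ 2 ≤ L * S := by
    have := enorm_sub_sq_le_horizontal hF s (left_mem_Icc.2 (hx.1.le.trans hx.2))
      (Ioc_subset_Icc_self hx)
    rwa [add_sub_cancel_left, ENNReal.ofReal_coe_nnreal, restrict_Ioo_eq_restrict_Ioc] at this
  have hdefect : ∀ᵐ x ∂volume.restrict (Ioc a (a + L)),
      ‖n x (F (a, s))‖ₑ ^ 2 ≤ 2 * M ^ 2 * (L * S + H * D x) := by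
    filter_upwards [ae_restrict_mem measurableSet_Ioc, ae_restrict_of_ae hbdry] with x hx hbx
    refine (enorm_apply_sq_le_of_apply_eq_zero (hn x) hbx (F (x, s)) _).trans ?_
    gcongr
    · exact hhorizontal x hx
    · exact enorm_sub_sq_le_column hF (hωH x) ⟨hωs x, hs⟩ (left_mem_Icc.2 ((hωs x).trans hs))
  calc ‖F (a, s)‖ₑ ^ 2
      ≤ ∫⁻ x in Ioc a (a + L), ‖n x (F (a, s))‖ₑ ^ 2 := hco a _
    _ ≤ ∫⁻ x in Ioc a (a + L), 2 * M ^ 2 * (L * S + H * D x) := lintegral_mono_ae hdefect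
    _ = 2 * M ^ 2 * ((∫⁻ x in Ioc a (a + L), H * D x) + L ^ 2 * S) := by
        rw [lintegral_const_mul' _ _ (by finiteness), lintegral_add_left measurable_const,
          setLIntegral_const, Real.volume_Ioc, add_sub_cancel_left, ENNReal.ofReal_coe_nnreal]
        ring
    _ = _ := by
        rw [hS, ← lintegral_const_mul' _ _ (by finiteness),
          ← lintegral_add_left (hDmeas.const_mul _)]

theorem IsWindowCoercive.lintegral_trace_le (hco : IsWindowCoercive n L) (hn : ∀ x, ‖n x‖₊ ≤ M)
    (hω : Measurable ω) (hωH : ∀ x, -H ≤ ω x) (hωs : ∀ x, ω x ≤ s) (hs : s ≤ 0)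
    (hF : ContDiff ℝ 1 F) (hbdry : ∀ᵐ x, n x (F (x, ω x)) = 0) :
    ∫⁻ a, ‖F (a, s)‖ₑ ^ 2 ≤ 2 * M ^ 2 * L *
      (H * (∫⁻ y in layerR ω, dirichletDensity F y) +
        L ^ 2 * ∫⁻ x, dirichletDensity F (x, s)) := by
  have hD := measurable_dirichletDensity hF
  have hcolumn := (measurable_lintegral_column hω hD).const_mul (H : ℝ≥0∞)
  have hslice : Measurable fun x => (L : ℝ≥0∞) ^ 2 * dirichletDensity F (x, s) :=
    (hD.comp (by fun_prop)).const_mul _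
  have hsum : Measurable fun x => H * (∫⁻ t in Ioo (ω x) 0, dirichletDensity F (x, t)) +
      L ^ 2 * dirichletDensity F (x, s) := hcolumn.add hslice
  refine (lintegral_mono fun a => hco.enorm_sq_le hn hω hωH hωs hs hF hbdry a).trans_eq ?_
  rw [lintegral_const_mul' _ _ (by finiteness),
    lintegral_setLIntegral_Ioc_add hsum, lintegral_add_left hcolumn,
    lintegral_const_mul' _ _ (by finiteness), lintegral_const_mul' _ _ (by finiteness),
    ← lintegral_layerR hω hD, mul_assoc (2 * (M : ℝ≥0∞) ^ 2)]

theorem IsWindowCoercive.poincare (hco : IsWindowCoercive n L) (hn : ∀ x, ‖n x‖₊ ≤ M)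
    (hω : Measurable ω) (hωH : ∀ x, -H ≤ ω x) (hh : h ≠ 0) (hωh : ∀ x, ω x ≤ -h)
    (hF : ContDiff ℝ 1 F) (hbdry : ∀ᵐ x, n x (F (x, ω x)) = 0) :
    ∫⁻ y in layerR ω, ‖F y‖ₑ ^ 2 ≤
      (2 * H * (2 * M ^ 2 * L * (H + L ^ 2 / h) + H) : ℝ≥0) *
        ∫⁻ y in layerR ω, dirichletDensity F y := by
  obtain ⟨s, ⟨hhs, hs⟩, hslice⟩ :=
    exists_lintegral_slice_le hh hωh (measurable_dirichletDensity hF)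
  have hωs (x : ℝ) : ω x ≤ s := (hωh x).trans hhs.le
  set J := ∫⁻ y in layerR ω, dirichletDensity F y
  calc ∫⁻ y in layerR ω, ‖F y‖ₑ ^ 2
      ≤ 2 * H * ((∫⁻ x, ‖F (x, s)‖ₑ ^ 2) + H * J) :=
        lintegral_layerR_le_trace hω hωH hωs hs.le hF
    _ ≤ 2 * H * (2 * M ^ 2 * L * (H * J + L ^ 2 * ∫⁻ x, dirichletDensity F (x, s)) + H * J) := by
        gcongr
        exact hco.lintegral_trace_le hn hω hωH hωs hs.le hF hbdry
    _ ≤ 2 * H * (2 * M ^ 2 * L * (H * J + L ^ 2 * (J / h)) + H * J) := by gcongr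
    _ = _ := by
        push_cast [div_eq_mul_inv, ENNReal.coe_inv hh]
        ring

end Poincare

section Graph

variable {ω : ℝ → ℝ} {K : ℝ≥0}

/-- The functional `w ↦ w · (−ω'(x), 1)` of the unnormalised normal of the graph of `ω` above `x`,
on `ℝ²` with its Euclidean norm. -/
def graphConormal (ω : ℝ → ℝ) (x : ℝ) : WithLp 2 (ℝ × ℝ) →L[ℝ] ℝ :=
  innerSL ℝ (WithLp.toLp 2 (-deriv ω x, 1))

theorem graphConormal_apply (ω : ℝ → ℝ) (x : ℝ) (w : WithLp 2 (ℝ × ℝ)) :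
    graphConormal ω x w = w.snd - w.fst * deriv ω x := by
  simp only [graphConormal, innerSL_apply_apply, WithLp.prod_inner_apply, RCLike.inner_apply,
    conj_trivial]
  change w.fst * -deriv ω x + w.snd * 1 = _
  ring

theorem deriv_sq_le_of_lipschitz (hω : LipschitzWith K ω) (x : ℝ) :
    deriv ω x ^ 2 ≤ (K : ℝ) ^ 2 := by
  simpa using pow_le_pow_left₀ (norm_nonneg _) (norm_deriv_le_of_lipschitz hω (x₀ := x)) 2

theorem nnnorm_graphConormal_le (hω : LipschitzWith K ω) (x : ℝ) :
    ‖graphConormal ω x‖₊ ≤ NNReal.sqrt (1 + K ^ 2) := by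
  rw [NNReal.le_sqrt_iff_sq_le, ← NNReal.coe_le_coe]
  push_cast
  rw [graphConormal, innerSL_apply_norm, WithLp.prod_norm_sq_eq_of_L2]
  simpa [add_comm] using deriv_sq_le_of_lipschitz hω x

theorem intervalIntegrable_deriv_of_lipschitz (hω : LipschitzWith K ω) (a b : ℝ) :
    IntervalIntegrable (deriv ω) volume a b :=
  hω.lipschitzOnWith.absolutelyContinuousOnInterval.intervalIntegrable_deriv

theorem intervalIntegrable_deriv_sq_of_lipschitz (hω : LipschitzWith K ω) (a b : ℝ) :
    IntervalIntegrable (fun x => deriv ω x ^ 2) volume a b := by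
  refine (intervalIntegrable_const (c := (K : ℝ) ^ 2)).mono_fun
    ((measurable_deriv ω).pow_const 2).aestronglyMeasurable (Eventually.of_forall fun x => ?_)
  simpa using deriv_sq_le_of_lipschitz hω x

theorem graphConormal_apply_sq (ω : ℝ → ℝ) (x : ℝ) (w : WithLp 2 (ℝ × ℝ)) :
    graphConormal ω x w ^ 2 =
      w.snd ^ 2 - 2 * w.fst * w.snd * deriv ω x + w.fst ^ 2 * deriv ω x ^ 2 := by
  rw [graphConormal_apply]
  ring

theorem intervalIntegrable_graphConormal_sq (hω : LipschitzWith K ω) (w : WithLp 2 (ℝ × ℝ))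
    (a b : ℝ) :
    IntervalIntegrable (fun x => graphConormal ω x w ^ 2) volume a b := by
  simp_rw [graphConormal_apply_sq]
  exact (intervalIntegrable_const.sub
    ((intervalIntegrable_deriv_of_lipschitz hω a b).const_mul _)).add
    ((intervalIntegrable_deriv_sq_of_lipschitz hω a b).const_mul _)

theorem integral_graphConormal_sq (hω : LipschitzWith K ω) (w : WithLp 2 (ℝ × ℝ))
    (a b : ℝ) :
    ∫ x in a..b, graphConormal ω x w ^ 2 =
      (b - a) * w.snd ^ 2 - 2 * w.fst * w.snd * (ω b - ω a) +
        w.fst ^ 2 * ∫ x in a..b, deriv ω x ^ 2 := by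
  have hcross := (intervalIntegrable_deriv_of_lipschitz hω a b).const_mul (2 * w.fst * w.snd)
  simp_rw [graphConormal_apply_sq]
  rw [intervalIntegral.integral_add (intervalIntegrable_const.sub hcross)
      ((intervalIntegrable_deriv_sq_of_lipschitz hω a b).const_mul _),
    intervalIntegral.integral_sub intervalIntegrable_const hcross,
    intervalIntegral.integral_const_mul, intervalIntegral.integral_const_mul,
    intervalIntegral.integral_const, smul_eq_mul,
    hω.lipschitzOnWith.absolutelyContinuousOnInterval.integral_deriv_eq_sub]

theorem norm_sq_le_integral_graphConormal_sq (hω : LipschitzWith K ω) {H a b : ℝ}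
    (hosc : |ω b - ω a| ≤ H) (hab : 2 ≤ b - a) (henergy : 1 + H ^ 2 ≤ ∫ x in a..b, deriv ω x ^ 2)
    (w : WithLp 2 (ℝ × ℝ)) :
    ‖w‖ ^ 2 ≤ ∫ x in a..b, graphConormal ω x w ^ 2 := by
  have hosc_sq : (ω b - ω a) ^ 2 ≤ H ^ 2 := sq_le_sq.2 (hosc.trans (le_abs_self H))
  have hsnd : 2 * w.snd ^ 2 ≤ (b - a) * w.snd ^ 2 := by gcongr
  have hfst : w.fst ^ 2 * (1 + (ω b - ω a) ^ 2) ≤ w.fst ^ 2 * ∫ x in a..b, deriv ω x ^ 2 := by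
    gcongr
    linarith
  rw [integral_graphConormal_sq hω, WithLp.prod_norm_sq_eq_of_L2, Real.norm_eq_abs,
    Real.norm_eq_abs, sq_abs, sq_abs]
  linarith [sq_nonneg (w.snd - w.fst * (ω b - ω a))]

theorem nat_mul_le_intervalIntegral {f : ℝ → ℝ} (hf : ∀ a b, IntervalIntegrable f volume a b)
    {A δ : ℝ} (hwindow : ∀ a, δ ≤ ∫ t in (0 : ℝ)..A, f (a + t)) (N : ℕ) (a : ℝ) :
    N * δ ≤ ∫ x in a..a + N * A, f x := by
  calc N * δ = ∑ _k ∈ Finset.range N, δ := by simp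
    _ ≤ ∑ k ∈ Finset.range N, ∫ x in a + k * A..a + (k + 1 : ℕ) * A, f x := by
        refine Finset.sum_le_sum fun k _ => (hwindow (a + k * A)).trans_eq ?_
        rw [intervalIntegral.integral_comp_add_left]
        push_cast
        ring_nf
    _ = ∫ x in a..a + N * A, f x := by
        simpa using intervalIntegral.sum_integral_adjacent_intervals (n := N)
          (a := fun k : ℕ => a + k * A) fun k _ => hf _ _

theorem exists_isWindowCoercive_graphConormal (hω : LipschitzWith K ω) {H : ℝ}
    (hosc : ∀ x y, |ω x - ω y| ≤ H)
    (hnd : ∃ A > 0, 0 < ⨅ a : ℝ, ∫ t in (0 : ℝ)..A, deriv ω (a + t) ^ 2) :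
    ∃ L : ℝ≥0, IsWindowCoercive (graphConormal ω) L := by
  obtain ⟨A, hA, hδ⟩ := hnd
  set δ := ⨅ a : ℝ, ∫ t in (0 : ℝ)..A, deriv ω (a + t) ^ 2
  have hwindow (a : ℝ) : δ ≤ ∫ t in (0 : ℝ)..A, deriv ω (a + t) ^ 2 := by
    refine ciInf_le ⟨0, ?_⟩ a
    rintro _ ⟨y, rfl⟩
    exact intervalIntegral.integral_nonneg hA.le fun t _ => sq_nonneg _
  obtain ⟨N, hN⟩ := exists_nat_ge (max (2 / A) ((1 + H ^ 2) / δ))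
  have hlength : 2 ≤ N * A := (div_le_iff₀ hA).1 ((le_max_left _ _).trans hN)
  have henergy : 1 + H ^ 2 ≤ N * δ := (div_le_iff₀ hδ).1 ((le_max_right _ _).trans hN)
  refine ⟨⟨N * A, by positivity⟩, fun a c => ?_⟩
  have hgrowth : N * δ ≤ ∫ x in a..a + N * A, deriv ω x ^ 2 :=
    nat_mul_le_intervalIntegral (intervalIntegrable_deriv_sq_of_lipschitz hω) hwindow N a
  have hcoercive := norm_sq_le_integral_graphConormal_sq hω (hosc (a + N * A) a)
    (by simpa using hlength) (henergy.trans hgrowth) c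
  have hle : a ≤ a + N * A := by linarith
  rw [intervalIntegral.integral_of_le hle] at hcoercive
  calc ‖c‖ₑ ^ 2 = ENNReal.ofReal (‖c‖ ^ 2) := by
        rw [ENNReal.ofReal_pow (norm_nonneg _), ofReal_norm]
    _ ≤ ENNReal.ofReal (∫ x in Ioc a (a + N * A), graphConormal ω x c ^ 2) :=
        ENNReal.ofReal_le_ofReal hcoercive
    _ = ∫⁻ x in Ioc a (a + N * A), ENNReal.ofReal (graphConormal ω x c ^ 2) :=
        ofReal_integral_eq_lintegral_ofReal
          ((intervalIntegrable_iff_integrableOn_Ioc_of_le hle).1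
            (intervalIntegrable_graphConormal_sq hω c _ _))
          (Eventually.of_forall fun x => sq_nonneg _)
    _ = ∫⁻ x in Ioc a (a + N * A), ‖graphConormal ω x c‖ₑ ^ 2 := by
        simp_rw [← sq_abs (graphConormal ω _ c), ENNReal.ofReal_pow (abs_nonneg _),
          Real.enorm_eq_ofReal_abs]

end Graph

section RoughLayer

theorem ofReal_vsq (w : ℝ × ℝ) : ENNReal.ofReal (vsq w) = ‖WithLp.toLp 2 w‖ₑ ^ 2 := by
  rw [← ofReal_norm, ← ENNReal.ofReal_pow (norm_nonneg _), WithLp.prod_norm_sq_eq_of_L2]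
  simp [vsq]

theorem vsq_nonneg (w : ℝ × ℝ) : 0 ≤ vsq w := by
  unfold vsq
  positivity

theorem continuous_vsq : Continuous vsq := by
  unfold vsq
  fun_prop

variable {u : ℝ × ℝ → ℝ × ℝ}

theorem gradSq_nonneg (u : ℝ × ℝ → ℝ × ℝ) (y : ℝ × ℝ) : 0 ≤ gradSq u y :=
  add_nonneg (vsq_nonneg _) (vsq_nonneg _)

theorem ofReal_gradSq (u : ℝ × ℝ → ℝ × ℝ) (y : ℝ × ℝ) :
    ENNReal.ofReal (gradSq u y) = dirichletDensity (fun z => WithLp.toLp 2 (u z)) y := by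
  have hderiv (v : ℝ × ℝ) :
      fderiv ℝ (fun z => WithLp.toLp 2 (u z)) y v = WithLp.toLp 2 (fderiv ℝ u y v) :=
    DFunLike.congr_fun
      ((WithLp.prodContinuousLinearEquiv 2 ℝ ℝ ℝ).symm.comp_fderiv (f := u) (x := y)) v
  rw [gradSq, dirichletDensity, ENNReal.ofReal_add (vsq_nonneg _) (vsq_nonneg _)]
  simp_rw [hderiv, ofReal_vsq]

theorem integrable_gradSq (hu : ContDiff ℝ 1 u) (hsupp : HasCompactSupport u) :
    Integrable (gradSq u) := by
  have hu' (v : ℝ × ℝ) : Continuous fun y => fderiv ℝ u y v :=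
    (hu.continuous_fderiv one_ne_zero).clm_apply continuous_const
  refine Continuous.integrable_of_hasCompactSupport (f := gradSq u)
    ((continuous_vsq.comp (hu' _)).add (continuous_vsq.comp (hu' _))) ?_
  exact (hsupp.fderiv ℝ).comp_left
    (g := fun T : ℝ × ℝ →L[ℝ] ℝ × ℝ => vsq (T (1, 0)) + vsq (T (0, 1))) (by simp [vsq])

theorem tangentOn_iff_graphConormal_eq_zero {ω : ℝ → ℝ} : TangentOn ω u ↔
    ∀ᵐ x, graphConormal ω x (WithLp.toLp 2 (u (x, ω x))) = 0 := by
  simp only [TangentOn, graphConormal_apply, mul_neg, neg_add_eq_sub]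
  rfl

theorem integrable_and_integral_le_of_lintegral_le {α : Type*} [MeasurableSpace α] {μ : Measure α}
    {f g : α → ℝ} (hf : AEStronglyMeasurable f μ) (hf₀ : 0 ≤ f) (hg : Integrable g μ) (hg₀ : 0 ≤ g)
    {C : ℝ≥0} (hle : ∫⁻ x, ENNReal.ofReal (f x) ∂μ ≤ C * ∫⁻ x, ENNReal.ofReal (g x) ∂μ) :
    Integrable f μ ∧ ∫ x, f x ∂μ ≤ C * ∫ x, g x ∂μ := by
  rw [← ofReal_integral_eq_lintegral_ofReal hg (Eventually.of_forall hg₀)] at hle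
  have hfint : Integrable f μ :=
    (lintegral_ofReal_ne_top_iff_integrable hf (Eventually.of_forall hf₀)).1
      (ne_top_of_le_ne_top (by finiteness) hle)
  refine ⟨hfint, ?_⟩
  rwa [← ofReal_integral_eq_lintegral_ofReal hfint (Eventually.of_forall hf₀),
    ← ENNReal.ofReal_coe_nnreal, ← ENNReal.ofReal_mul C.coe_nonneg,
    ENNReal.ofReal_le_ofReal_iff (mul_nonneg C.coe_nonneg (integral_nonneg hg₀))] at hle

theorem exists_neg_le_and_le_neg_of_iSup_neg {ω : ℝ → ℝ} (hbdd : BddBelow (range ω))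
    (hsup : (⨆ t, ω t) < 0) :
    ∃ H h : ℝ≥0, h ≠ 0 ∧ (∀ x, -H ≤ ω x) ∧ ∀ x, ω x ≤ -h := by
  have habove : BddAbove (range ω) := by
    by_contra hunbounded
    exact hsup.ne (Real.iSup_of_not_bddAbove hunbounded)
  obtain ⟨m, hm⟩ := hbdd
  refine ⟨(-m).toNNReal, (-⨆ t, ω t).toNNReal, by simpa using hsup, fun x => ?_, fun x => ?_⟩
  · linarith [hm (mem_range_self x), Real.le_coe_toNNReal (-m)]
  · rw [Real.coe_toNNReal _ (by linarith), neg_neg]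
    exact le_ciSup habove x

theorem stmt0_general (ω : ℝ → ℝ) (K : NNReal) (hlip : LipschitzWith K ω)
    (hbdd : BddBelow (range ω)) (hsup : (⨆ t : ℝ, ω t) < 0)
    (hnd : ∃ A > 0, 0 < ⨅ y₁ : ℝ, ∫ t in (0 : ℝ)..A, (deriv ω (y₁ + t)) ^ 2) :
    ∃ C > 0, ∀ u : ℝ × ℝ → ℝ × ℝ, ContDiff ℝ 1 u → TangentOn ω u →
      IntegrableOn (gradSq u) (layerR ω) →
      IntegrableOn (fun y => vsq (u y)) (layerR ω) ∧
        Real.sqrt (∫ y in layerR ω, vsq (u y)) ≤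
          C * Real.sqrt (∫ y in layerR ω, gradSq u y) := by
  obtain ⟨H, h, hh, hωH, hωh⟩ := exists_neg_le_and_le_neg_of_iSup_neg hbdd hsup
  obtain ⟨L, hL⟩ := exists_isWindowCoercive_graphConormal hlip (H := H)
    (fun x y => abs_le.2 (by constructor <;> linarith [hωH x, hωH y, hωh x, hωh y, h.2])) hnd
  have hH : 0 < H := by
    have : (0 : ℝ) < H := by linarith [hωH 0, hωh 0, NNReal.coe_pos.2 (pos_iff_ne_zero.2 hh)]
    exact_mod_cast this
  set M := NNReal.sqrt (1 + K ^ 2)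
  set C : ℝ≥0 := 2 * H * (2 * M ^ 2 * L * (H + L ^ 2 / h) + H)
  refine ⟨√C, by positivity, fun u hu htan hgrad => ?_⟩
  have hpoincare : ∫⁻ y in layerR ω, ENNReal.ofReal (vsq (u y)) ≤
      C * ∫⁻ y in layerR ω, ENNReal.ofReal (gradSq u y) := by
    simp_rw [ofReal_vsq, ofReal_gradSq]
    exact hL.poincare (nnnorm_graphConormal_le hlip) hlip.continuous.measurable hωH hh hωh
      ((WithLp.prodContinuousLinearEquiv 2 ℝ ℝ ℝ).symm.contDiff.comp hu)
      (tangentOn_iff_graphConormal_eq_zero.1 htan)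
  obtain ⟨hint, hle⟩ := integrable_and_integral_le_of_lintegral_le
    (continuous_vsq.comp hu.continuous).aestronglyMeasurable (fun y => vsq_nonneg (u y)) hgrad
    (gradSq_nonneg u) hpoincare
  exact ⟨hint, (Real.sqrt_le_sqrt hle).trans_eq (Real.sqrt_mul C.coe_nonneg _)⟩

end RoughLayer

/-- If `ω` is Lipschitz with values in `(−1,0)`, `sup ω < 0`, and the roughness is
non-degenerate in the sense that `inf_{y₁} ∫₀^A ω'(y₁+t)² dt > 0` for some `A > 0`,
then the Poincaré inequality `‖u‖_{L²(R)} ≤ 𝒞 ‖∇u‖_{L²(R)}` holds for all smooth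
compactly supported vector fields that are tangent to `Γ`. -/
theorem stmt0 (ω : ℝ → ℝ) (K : NNReal) (hlip : LipschitzWith K ω)
    (hval : ∀ t, ω t ∈ Set.Ioo (-1 : ℝ) 0)
    (hsup : (⨆ t : ℝ, ω t) < 0)
    (hnd : ∃ A > 0, 0 < ⨅ y₁ : ℝ, ∫ t in (0 : ℝ)..A, (deriv ω (y₁ + t)) ^ 2) :
    ∃ C > 0, ∀ u : ℝ × ℝ → ℝ × ℝ, ContDiff ℝ (⊤ : ℕ∞) u → HasCompactSupport u →
      TangentOn ω u →
      Real.sqrt (∫ y in layerR ω, vsq (u y)) ≤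
        C * Real.sqrt (∫ y in layerR ω, gradSq u y) := by
  have hbdd : BddBelow (range ω) := ⟨-1, by rintro _ ⟨t, rfl⟩; exact (hval t).1.le⟩
  obtain ⟨C, hC, hpoincare⟩ := stmt0_general ω K hlip hbdd hsup hnd
  exact ⟨C, hC, fun u hu hsupp htan => (hpoincare u (hu.of_le (by simp)) htan
    (integrable_gradSq (hu.of_le (by simp)) hsupp).integrableOn).2⟩
end
end

section
/- Let ω ≡ −1, so that R = ℝ×(−1,0), Γ = ℝ×{−1} and the inward normal is ν = (0,1). Then for every constant C > 0 there exists a smooth compactly supported vector field u : closure(R) → ℝ² with second component identically zero (hence u·ν = 0 on Γ) such that ‖u‖_{L²(R)} > C ‖∇u‖_{L²(R)}. In particular no Poincaré inequality ‖u‖_{L²(R)} ≤ C‖∇u‖_{L²(R)} can hold for all tangent fields when the lower boundary is flat. -/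
/-!
On the line the Poincaré inequality fails by scaling: for `ε > 0`, passing from `f` to `f (ε ·)`
multiplies `∫ |f'|²` by `ε` and `∫ |f|²` by `ε⁻¹`, so their quotient tends to `0` with `ε`. The flat
layer inherits this failure in the horizontal direction: if `χ = 1` on `(-1, 0)`, then the field
`(g y₁ * χ y₂, 0)` is tangent to the boundary and, the layer having height one, its `L²` norm and
that of its gradient over the layer are those of `g` and `g'` over `ℝ`.
-/

open MeasureTheory Real Set Filter

noncomputable section

/-- The flat layer `R = ℝ × (−1,0)`. -/
def flatR : Set (ℝ × ℝ) := {y : ℝ × ℝ | -1 < y.2 ∧ y.2 < 0}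

open scoped Topology

section Stretching

variable {F : Type*} [NormedAddCommGroup F] [NormedSpace ℝ F]

theorem integral_norm_deriv_comp_mul_left_pow (f : ℝ → F) (p : ℕ) (ε : ℝ) :
    ∫ x, ‖deriv (fun t => f (ε * t)) x‖ ^ p = |ε| ^ p * (|ε⁻¹| * ∫ x, ‖deriv f x‖ ^ p) := by
  simp_rw [deriv_comp_mul_left, norm_smul, Real.norm_eq_abs, mul_pow]
  rw [integral_const_mul, Measure.integral_comp_mul_left (fun x => ‖deriv f x‖ ^ p), smul_eq_mul]

theorem exists_pos_mul_integral_norm_deriv_comp_mul_left_pow_lt {f : ℝ → F} {p : ℕ} (hp : p ≠ 0)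
    (hf : 0 < ∫ x, ‖f x‖ ^ p) (K : ℝ) :
    ∃ ε > 0, K * ∫ x, ‖deriv (fun t => f (ε * t)) x‖ ^ p < ∫ x, ‖f (ε * x)‖ ^ p := by
  have hlim : Tendsto (fun ε : ℝ => K * (|ε| ^ p * ∫ x, ‖deriv f x‖ ^ p)) (𝓝[>] 0) (𝓝 0) :=
    (Continuous.tendsto' (by fun_prop) _ _ (by simp [hp])).mono_left nhdsWithin_le_nhds
  obtain ⟨ε, hε, hlt⟩ := (eventually_mem_nhdsWithin.and (hlim.eventually_lt_const hf)).exists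
  refine ⟨ε, hε, ?_⟩
  calc K * ∫ x, ‖deriv (fun t => f (ε * t)) x‖ ^ p
      = |ε⁻¹| * (K * (|ε| ^ p * ∫ x, ‖deriv f x‖ ^ p)) := by
        rw [integral_norm_deriv_comp_mul_left_pow]
        ring
    _ < |ε⁻¹| * ∫ x, ‖f x‖ ^ p :=
        mul_lt_mul_of_pos_left hlt (abs_pos.2 (inv_ne_zero (ne_of_gt hε)))
    _ = ∫ x, ‖f (ε * x)‖ ^ p := (Measure.integral_comp_mul_left (fun x => ‖f x‖ ^ p) ε).symm

end Stretching

theorem exists_contDiff_hasCompactSupport_mul_integral_deriv_sq_lt (K : ℝ) :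
    ∃ g : ℝ → ℝ, ContDiff ℝ (⊤ : ℕ∞) g ∧ HasCompactSupport g ∧
      K * ∫ x, deriv g x ^ 2 < ∫ x, g x ^ 2 := by
  let f : ContDiffBump (0 : ℝ) := default
  have hf_pos : 0 < ∫ x, ‖f x‖ ^ 2 := by
    refine (f.continuous.norm.pow 2).integral_pos_of_hasCompactSupport_nonneg_nonzero (x := 0)
      ?_ (fun x => by positivity) ?_
    · exact f.hasCompactSupport.comp_left (g := fun t : ℝ => ‖t‖ ^ 2) (by simp)
    · simp [f.one_of_mem_closedBall (Metric.mem_closedBall_self f.rIn_pos.le)]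
  obtain ⟨ε, hε, hlt⟩ :=
    exists_pos_mul_integral_norm_deriv_comp_mul_left_pow_lt two_ne_zero hf_pos K
  refine ⟨fun x => f (ε * x), f.contDiff.comp (contDiff_const.mul contDiff_id),
    f.hasCompactSupport.comp_homeomorph (Homeomorph.mulLeft₀ ε hε.ne'), ?_⟩
  simpa only [Real.norm_eq_abs, sq_abs] using hlt

/-- The horizontal field `(g y₁ * χ y₂, 0)` with profile `g` along the layer and vertical
cutoff `χ`. -/
def horizontalField (g χ : ℝ → ℝ) (y : ℝ × ℝ) : ℝ × ℝ := (g y.1 * χ y.2, 0)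

section HorizontalField

variable {g χ : ℝ → ℝ}

theorem contDiff_horizontalField {n : WithTop ℕ∞} (hg : ContDiff ℝ n g) (hχ : ContDiff ℝ n χ) :
    ContDiff ℝ n (horizontalField g χ) :=
  ((hg.comp contDiff_fst).mul (hχ.comp contDiff_snd)).prodMk contDiff_const

theorem hasCompactSupport_horizontalField (hg : HasCompactSupport g) (hχ : HasCompactSupport χ) :
    HasCompactSupport (horizontalField g χ) := by
  refine HasCompactSupport.intro (hg.isCompact.prod hχ.isCompact) fun y hy => ?_
  rw [mem_prod, not_and_or] at hy
  rcases hy with hy | hy <;> simp [horizontalField, image_eq_zero_of_notMem_tsupport hy]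

theorem vsq_horizontalField (g χ : ℝ → ℝ) (y : ℝ × ℝ) :
    vsq (horizontalField g χ y) = (g y.1 * χ y.2) ^ 2 := by
  simp [vsq, horizontalField]

theorem gradSq_horizontalField {y : ℝ × ℝ} (hg : DifferentiableAt ℝ g y.1)
    (hχ : DifferentiableAt ℝ χ y.2) :
    gradSq (horizontalField g χ) y = (deriv g y.1 * χ y.2) ^ 2 + (g y.1 * deriv χ y.2) ^ 2 := by
  have hfst := hg.hasDerivAt.comp_hasFDerivAt y (hasFDerivAt_fst (𝕜 := ℝ) (p := y))
  have hsnd := hχ.hasDerivAt.comp_hasFDerivAt y (hasFDerivAt_snd (𝕜 := ℝ) (p := y))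
  have hfield : HasFDerivAt (horizontalField g χ) _ y :=
    (hfst.mul hsnd).prodMk (hasFDerivAt_const (0 : ℝ) y)
  simp [gradSq, hfield.fderiv, vsq, mul_comm]

end HorizontalField

theorem flatR_eq_prod : flatR = univ ×ˢ Ioo (-1 : ℝ) 0 := by
  ext y
  simp [flatR]

theorem setIntegral_flatR_eq_integral {E : Type*} [NormedAddCommGroup E] [NormedSpace ℝ E]
    {G : ℝ × ℝ → E} {g : ℝ → E} (h : ∀ y ∈ flatR, G y = g y.1) :
    ∫ y in flatR, G y = ∫ x, g x := by
  have hmeas : MeasurableSet flatR := by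
    rw [flatR_eq_prod]
    exact MeasurableSet.univ.prod measurableSet_Ioo
  rw [setIntegral_congr_fun hmeas h, flatR_eq_prod, Measure.volume_eq_prod,
    ← Measure.prod_restrict, integral_fun_fst]
  simp

theorem exists_contDiff_hasCompactSupport_eventuallyEq_one_on_flatR :
    ∃ χ : ℝ → ℝ, ContDiff ℝ (⊤ : ℕ∞) χ ∧ HasCompactSupport χ ∧ ∀ y ∈ flatR, χ =ᶠ[𝓝 y.2] 1 := by
  let χ : ContDiffBump (0 : ℝ) := ⟨1, 2, one_pos, one_lt_two⟩
  refine ⟨χ, χ.contDiff, χ.hasCompactSupport, fun y hy => χ.eventuallyEq_one_of_mem_ball ?_⟩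
  rw [mem_ball_zero_iff, Real.norm_eq_abs, abs_lt]
  exact ⟨hy.1, hy.2.trans one_pos⟩

/-- Over the flat layer `R = ℝ×(−1,0)` with lower boundary `Γ = ℝ×{−1}` and inward
normal `ν = (0,1)`, no Poincaré inequality holds for tangent fields: for every `C > 0`
there is a smooth compactly supported field `u` with vanishing second component
(hence `u·ν = 0` on `Γ`) such that `‖u‖_{L²(R)} > C ‖∇u‖_{L²(R)}`. -/
theorem stmt3 :
    ∀ C > 0, ∃ u : ℝ × ℝ → ℝ × ℝ, ContDiff ℝ (⊤ : ℕ∞) u ∧ HasCompactSupport u ∧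
      (∀ y, (u y).2 = 0) ∧
      C * Real.sqrt (∫ y in flatR, gradSq u y) <
        Real.sqrt (∫ y in flatR, vsq (u y)) := by
  intro C hC
  obtain ⟨g, hg, hg_supp, hlt⟩ :=
    exists_contDiff_hasCompactSupport_mul_integral_deriv_sq_lt (C ^ 2)
  obtain ⟨χ, hχ, hχ_supp, hχ_one⟩ := exists_contDiff_hasCompactSupport_eventuallyEq_one_on_flatR
  refine ⟨horizontalField g χ, contDiff_horizontalField hg hχ,
    hasCompactSupport_horizontalField hg_supp hχ_supp, fun _ => rfl, ?_⟩
  have hgrad : ∫ y in flatR, gradSq (horizontalField g χ) y = ∫ x, deriv g x ^ 2 :=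
    setIntegral_flatR_eq_integral fun y hy => by
      rw [gradSq_horizontalField (hg.differentiable (by simp) _) (hχ.differentiable (by simp) _),
        (hχ_one y hy).deriv_eq, (hχ_one y hy).eq_of_nhds]
      simp
  have hfield : ∫ y in flatR, vsq (horizontalField g χ y) = ∫ x, g x ^ 2 :=
    setIntegral_flatR_eq_integral fun y hy => by
      simp [vsq_horizontalField, (hχ_one y hy).eq_of_nhds]
  rw [hgrad, hfield, Real.lt_sqrt (by positivity), mul_pow, Real.sq_sqrt (by positivity)]
  exact hlt
end
end
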